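/- arXiv:2112.09846 — 5 statements merged into one kernel-verified Lean document; each statement's English description precedes it below -/
import Mathlib

section
/- Let A be a commutative ring, B a commutative A-algebra, d ≥ 1 an integer, and b, c : Fin d → B two d-tuples of elements of B. If there exist indices i ≠ j with c i = c j, then Σ_{t ∈ O(b)} (t 0 * c 0) ∧ (t 1 * c 1) ∧ ⋯ ∧ (t (d-1) * c (d-1)) = 0 in the d-th exterior power ⋀[A]^d B of B regarded as an A-module. -/
open scoped Classical

/-- The orbit sum of wedges `∑_{t ∈ O(b)} (t 0 * c 0) ∧ ⋯ ∧ (t (d-1) * c (d-1))`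
vanishes in `⋀[A]^d B` as soon as two of the `c i` coincide: the multilinear map
underlying the action of symmetric tensors on the top exterior power is alternating. -/
theorem orbit_sum_wedge_eq_zero_of_eq {A B : Type*} [CommRing A] [CommRing B] [Algebra A B]
    (d : ℕ) (hd : 1 ≤ d) (b c : Fin d → B)
    (h : ∃ i j : Fin d, i ≠ j ∧ c i = c j) :
    ∑ t ∈ Finset.univ.image (fun σ : Equiv.Perm (Fin d) => b ∘ σ),
      ExteriorAlgebra.ιMulti A d (fun i => t i * c i) = 0 := by
  obtain ⟨i, j, hij, hc⟩ := h
  have hcs : ∀ k, c (Equiv.swap i j k) = c k := by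
    intro k
    by_cases h1 : k = i
    · subst h1; rw [Equiv.swap_apply_left, hc]
    · by_cases h2 : k = j
      · subst h2; rw [Equiv.swap_apply_right, hc]
      · rw [Equiv.swap_apply_of_ne_of_ne h1 h2]
  refine Finset.sum_involution (fun t _ => t ∘ Equiv.swap i j) ?_ ?_ ?_ ?_
  · intro t _
    have e : (fun k => (t ∘ Equiv.swap i j) k * c k)
        = (fun k => t k * c k) ∘ Equiv.swap i j := by
      funext k
      simp only [Function.comp_apply, hcs]
    rw [e, AlternatingMap.map_swap _ _ hij, add_neg_cancel]
  · intro t _ hne heq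
    apply hne
    refine AlternatingMap.map_eq_zero_of_eq _ _ ?_ hij
    have h3 := congrFun heq i
    simp only [Function.comp_apply, Equiv.swap_apply_left] at h3
    simp only [h3, hc]
  · intro t ht
    obtain ⟨σ, _, rfl⟩ := Finset.mem_image.1 ht
    exact Finset.mem_image.2 ⟨σ * Equiv.swap i j, Finset.mem_univ _, rfl⟩
  · intro t _
    funext k
    simp only [Function.comp_apply, Equiv.swap_apply_self]
end

section
/- Let A be a commutative ring, B a commutative A-algebra, d ≥ 1 an integer, and b, c : Fin d → B. Then for every permutation σ of Fin d, Σ_{t ∈ O(b)} (t 0 * (c ∘ σ) 0) ∧ ⋯ ∧ (t (d-1) * (c ∘ σ) (d-1)) = sign(σ) · Σ_{t ∈ O(b)} (t 0 * c 0) ∧ ⋯ ∧ (t (d-1) * c (d-1)) in ⋀[A]^d B. -/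
open scoped Classical

/-- Antisymmetry of the orbit sum of wedges: permuting the tuple `c` by `σ` multiplies
`∑_{t ∈ O(b)} (t 0 * c 0) ∧ ⋯ ∧ (t (d-1) * c (d-1))` by the sign of `σ`. -/
theorem orbit_sum_wedge_comp_perm {A B : Type*} [CommRing A] [CommRing B] [Algebra A B]
    (d : ℕ) (hd : 1 ≤ d) (b c : Fin d → B) (σ : Equiv.Perm (Fin d)) :
    ∑ t ∈ Finset.univ.image (fun τ : Equiv.Perm (Fin d) => b ∘ τ),
      ExteriorAlgebra.ιMulti A d (fun i => t i * (c ∘ σ) i) =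
    (Equiv.Perm.sign σ : ℤ) •
      ∑ t ∈ Finset.univ.image (fun τ : Equiv.Perm (Fin d) => b ∘ τ),
        ExteriorAlgebra.ιMulti A d (fun i => t i * c i) := by
  rw [Finset.smul_sum]
  refine Finset.sum_bij (fun t _ => t ∘ σ.symm) ?_ ?_ ?_ ?_
  · intro t ht
    obtain ⟨τ, -, rfl⟩ := Finset.mem_image.1 ht
    exact Finset.mem_image.2 ⟨τ * σ⁻¹, Finset.mem_univ _, rfl⟩
  · intro t _ s _ h
    exact σ.symm.surjective.injective_comp_right h
  · intro t ht
    obtain ⟨τ, -, rfl⟩ := Finset.mem_image.1 ht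
    refine ⟨b ∘ (τ * σ : Equiv.Perm (Fin d)),
      Finset.mem_image.2 ⟨τ * σ, Finset.mem_univ _, rfl⟩, ?_⟩
    funext i
    simp
  · intro t _
    have h := (ExteriorAlgebra.ιMulti A d (M := B)).map_perm
      (fun i => (t ∘ σ.symm) i * c i) σ
    have e : (fun i => t i * (c ∘ σ) i) = (fun i => (t ∘ σ.symm) i * c i) ∘ σ := by
      funext i
      simp
    rw [e, h]
    rfl
end

section
/- Let K be a field and B a local finite-dimensional commutative K-algebra whose residue field is K; set d = dim_K B and let ε : B → K be the unique K-algebra homomorphism. Let (e_1, …, e_d) be any K-basis of B. Then for every function f : Fin d → Fin d with S_d-orbit Γ (under precomposition by permutations), and for all c : Fin d → B, one has Σ_{g ∈ Γ} (e_{g(0)} * c 0) ∧ ⋯ ∧ (e_{g(d-1)} * c (d-1)) = |Γ| · ε(e_{f(0)} ⋯ e_{f(d-1)}) • (c 0 ∧ ⋯ ∧ c (d-1)) in ⋀[K]^d B, where |Γ| is the cardinality of the orbit Γ. -/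
open scoped Classical

theorem aux_vec {K B : Type*} [Field K] [CommRing B] [Algebra K B]
    [FiniteDimensional K B] [IsLocalRing B] (S : Submodule K B) (hS : S ≠ ⊤) :
    ∃ v, v ∉ S ∧ ∀ y ∈ IsLocalRing.maximalIdeal B, y * v ∈ S := by
  haveI : IsArtinianRing B := IsArtinianRing.of_finite K B
  have hnil : IsNilpotent (IsLocalRing.maximalIdeal B) := by
    have h := IsArtinianRing.isNilpotent_jacobson_bot (R := B)
    rwa [IsLocalRing.jacobson_eq_maximalIdeal ⊥ bot_ne_top] at h
  obtain ⟨N, hN⟩ := hnil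
  have hex : ∃ k, ∀ z ∈ (IsLocalRing.maximalIdeal B) ^ k, z ∈ S := by
    refine ⟨N, fun z hz => ?_⟩
    rw [hN] at hz
    have : z = 0 := by simpa using hz
    simp [this]
  have hspec := Nat.find_spec hex
  have hmin := fun {m} => Nat.find_min hex (m := m)
  cases hk : Nat.find hex with
  | zero =>
    rw [hk] at hspec
    exact absurd (eq_top_iff.2 fun z _ => hspec z (by simp)) hS
  | succ k =>
    rw [hk] at hspec
    have := hmin (m := k) (by omega)
    push Not at this
    obtain ⟨v, hv, hvS⟩ := this
    refine ⟨v, hvS, fun y hy => hspec _ ?_⟩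
    rw [pow_succ']
    exact Ideal.mul_mem_mul hy hv

theorem aux_sub_mem {K B : Type*} [Field K] [CommRing B] [Algebra K B] [IsLocalRing B]
    (ε : B →ₐ[K] K) (x : B) : x - algebraMap K B (ε x) ∈ IsLocalRing.maximalIdeal B := by
  rw [IsLocalRing.mem_maximalIdeal, mem_nonunits_iff]
  intro h
  have := h.map ε
  simp at this

theorem aux_family {K B : Type*} [Field K] [CommRing B] [Algebra K B]
    [FiniteDimensional K B] [IsLocalRing B] (ε : B →ₐ[K] K) (n : ℕ)
    (hn : n ≤ Module.finrank K B) :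
    ∃ b : Fin n → B, LinearIndependent K b ∧
      ∀ x i, x * b i - ε x • b i ∈ Submodule.span K (b '' Set.Iio i) := by
  induction n with
  | zero => exact ⟨Fin.elim0, linearIndependent_empty_type, fun x i => i.elim0⟩
  | succ n ih =>
    obtain ⟨b, hb, h⟩ := ih (by omega)
    have hS : Submodule.span K (Set.range b) ≠ ⊤ := by
      intro ht
      have h1 := finrank_span_eq_card hb
      rw [ht, finrank_top, Fintype.card_fin] at h1
      omega
    obtain ⟨v, hv, hvm⟩ := aux_vec _ hS
    refine ⟨Fin.snoc b v, linearIndependent_finSnoc.2 ⟨hb, hv⟩, fun x i => ?_⟩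
    refine Fin.lastCases ?_ (fun i => ?_) i
    · have := hvm _ (aux_sub_mem ε x)
      rw [sub_mul, ← Algebra.smul_def] at this
      rw [Fin.snoc_last]
      refine Submodule.span_mono ?_ this
      rintro _ ⟨j, rfl⟩
      exact ⟨j.castSucc, Fin.castSucc_lt_last j, by simp⟩
    · rw [Fin.snoc_castSucc]
      refine Submodule.span_mono ?_ (h x i)
      rintro _ ⟨j, hj, rfl⟩
      exact ⟨j.castSucc, Fin.castSucc_lt_castSucc_iff.2 hj, by simp⟩

theorem aux_det {K B N : Type*} [Field K] [CommRing B] [Algebra K B] [AddCommGroup N] [Module K N]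
    (ε : B →ₐ[K] K) (d : ℕ) (b : Module.Basis (Fin d) K B)
    (hb : ∀ x i, x * b i - ε x • b i ∈ Submodule.span K (b '' Set.Iio i))
    (ω : B [⋀^Fin d]→ₗ[K] N) (x : Fin d → B) :
    ω (fun i => x i * b i) = (∏ i, ε (x i)) • ω b := by
  have key : ω = (LinearMap.toSpanSingleton K N (ω b)).compAlternatingMap b.det := by
    refine Module.Basis.ext_alternating b fun v hv => ?_
    let σ : Equiv.Perm (Fin d) := Equiv.ofBijective v (Finite.injective_iff_bijective.1 hv)
    have h1 : (fun i => b (v i)) = b ∘ σ := rfl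
    rw [h1, AlternatingMap.map_perm, AlternatingMap.map_perm]
    simp [b.det_self]
  have hr : ∀ y i j, i ≤ j → b.repr (y * b i) j = if i = j then ε y else 0 := by
    intro y i j hij
    have := (b.mem_span_image).1 (hb y i)
    have h0 : b.repr (y * b i - ε y • b i) j = 0 := by
      by_contra hne
      have := this (Finsupp.mem_support_iff.2 hne)
      exact absurd this (not_lt.2 hij)
    rw [map_sub, map_smul, Finsupp.sub_apply, sub_eq_zero] at h0
    rw [h0]
    simp [Finsupp.single_apply]
  have hdet : b.det (fun i => x i * b i) = ∏ i, ε (x i) := by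
    rw [Module.Basis.det_apply, Matrix.det_of_upperTriangular]
    · exact Finset.prod_congr rfl fun i _ => by
        rw [Module.Basis.toMatrix_apply, hr _ _ _ le_rfl, if_pos rfl]
    · intro j i hij
      have hij : i < j := hij
      rw [Module.Basis.toMatrix_apply, hr _ _ _ hij.le, if_neg hij.ne]
  conv_lhs => rw [key]
  simp [hdet]

/-- The orbit sum as an alternating map in `c`. -/
noncomputable def auxAlt {K B N : Type*} [Field K] [CommRing B] [Algebra K B] [AddCommGroup N]
    [Module K N] (d : ℕ) (ω : B [⋀^Fin d]→ₗ[K] N) (e : Fin d → B) (Γ : Finset (Fin d → Fin d))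
    (hΓ : ∀ g ∈ Γ, ∀ σ : Equiv.Perm (Fin d), g ∘ σ ∈ Γ) : B [⋀^Fin d]→ₗ[K] N :=
  { (∑ g ∈ Γ, ω.toMultilinearMap.compLinearMap (fun i => LinearMap.mulLeft K (e (g i))) :
      MultilinearMap K (fun _ : Fin d => B) N) with
    map_eq_zero_of_eq' := by
      intro c i j hc hij
      simp only [MultilinearMap.toFun_eq_coe, MultilinearMap.sum_apply,
        MultilinearMap.compLinearMap_apply, LinearMap.mulLeft_apply, AlternatingMap.coe_multilinearMap]
      have hcs : c ∘ Equiv.swap i j = c := by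
        funext k
        simp only [Function.comp, Equiv.swap_apply_def]
        split_ifs with h1 h2
        · rw [h1, hc]
        · rw [h2, hc]
        · rfl
      refine Finset.sum_involution (fun g _ => g ∘ Equiv.swap i j) ?_ ?_ ?_ ?_
      · intro g _
        have h1 : (fun k => e ((g ∘ Equiv.swap i j) k) * c k)
            = (fun k => e (g k) * c k) ∘ Equiv.swap i j := by
          funext k
          have := congrFun hcs k
          simp only [Function.comp] at this ⊢
          rw [this]
        rw [h1, AlternatingMap.map_swap _ _ hij, add_neg_cancel]
      · intro g _ hne heq
        apply hne
        refine ω.map_eq_zero_of_eq _ ?_ hij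
        have := congrFun heq j
        simp at this
        simp only [this, hc]
      · intro g hg
        exact hΓ g hg _
      · intro g _
        funext k
        simp }

theorem auxAlt_apply {K B N : Type*} [Field K] [CommRing B] [Algebra K B] [AddCommGroup N]
    [Module K N] (d : ℕ) (ω : B [⋀^Fin d]→ₗ[K] N) (e : Fin d → B) (Γ : Finset (Fin d → Fin d))
    (hΓ : ∀ g ∈ Γ, ∀ σ : Equiv.Perm (Fin d), g ∘ σ ∈ Γ) (c : Fin d → B) :
    auxAlt d ω e Γ hΓ c = ∑ g ∈ Γ, ω (fun i => e (g i) * c i) := by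
  change (∑ g ∈ Γ, ω.toMultilinearMap.compLinearMap (fun i => LinearMap.mulLeft K (e (g i))) :
      MultilinearMap K (fun _ : Fin d => B) N) c = _
  simp [MultilinearMap.sum_apply]



/-- Lemma 2.2 of the paper: for a local finite `K`-algebra `B` of dimension `d` with residue
field `K`, with `ε : B → K` the unique `K`-algebra homomorphism and `(e_1, …, e_d)` a basis
of `B`, the orbit sum `∑_{g ∈ Γ} (e_{g 0} * c 0) ∧ ⋯ ∧ (e_{g (d-1)} * c (d-1))` equals
`|Γ| · ε(e_{f 0} ⋯ e_{f (d-1)}) • (c 0 ∧ ⋯ ∧ c (d-1))` in `⋀[K]^d B`. -/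
theorem orbit_sum_wedge_eq_card_smul {K B : Type*} [Field K] [CommRing B] [Algebra K B]
    [FiniteDimensional K B] [IsLocalRing B]
    (hres : Function.Bijective (⇑(IsLocalRing.residue B) ∘ ⇑(algebraMap K B)))
    (ε : B →ₐ[K] K) (hε : ∀ ε' : B →ₐ[K] K, ε' = ε)
    (d : ℕ) (hd : Module.finrank K B = d) (e : Module.Basis (Fin d) K B)
    (f : Fin d → Fin d) (Γ : Finset (Fin d → Fin d))
    (hΓ : Γ = Finset.univ.image (fun σ : Equiv.Perm (Fin d) => f ∘ σ))
    (c : Fin d → B) :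
    ∑ g ∈ Γ, ExteriorAlgebra.ιMulti K d (fun i => e (g i) * c i) =
      Γ.card • (ε (∏ i, e (f i)) • ExteriorAlgebra.ιMulti K d c) := by
  subst hd
  obtain ⟨b', hb', hb⟩ := aux_family ε (Module.finrank K B) le_rfl
  let b : Module.Basis (Fin (Module.finrank K B)) K B :=
    basisOfLinearIndependentOfCardEqFinrank' b' hb' (by simp)
  have hbb : ⇑b = b' := coe_basisOfLinearIndependentOfCardEqFinrank' _ _ _
  rw [← hbb] at hb
  have hcl : ∀ g ∈ Γ, ∀ σ : Equiv.Perm (Fin (Module.finrank K B)), g ∘ σ ∈ Γ := by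
    subst hΓ
    intro g hg σ
    obtain ⟨τ, -, rfl⟩ := Finset.mem_image.1 hg
    exact Finset.mem_image.2 ⟨τ * σ, Finset.mem_univ _, rfl⟩
  have hpr : ∀ g ∈ Γ, ∏ i, ε (e (g i)) = ε (∏ i, e (f i)) := by
    subst hΓ
    intro g hg
    obtain ⟨τ, -, rfl⟩ := Finset.mem_image.1 hg
    rw [map_prod]
    exact Equiv.prod_comp τ (fun i => ε (e (f i)))
  have main : auxAlt _ (ExteriorAlgebra.ιMulti K (Module.finrank K B)) e Γ hcl =
      Γ.card • (ε (∏ i, e (f i)) • ExteriorAlgebra.ιMulti K (Module.finrank K B)) := by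
    refine Module.Basis.ext_alternating b fun v hv => ?_
    let σ : Equiv.Perm (Fin (Module.finrank K B)) :=
      Equiv.ofBijective v (Finite.injective_iff_bijective.1 hv)
    have h1 : (fun i => b (v i)) = b ∘ σ := rfl
    rw [h1, AlternatingMap.map_perm, AlternatingMap.map_perm]
    congr 1
    rw [auxAlt_apply, AlternatingMap.smul_apply, AlternatingMap.smul_apply,
      ← Finset.sum_const]
    refine Finset.sum_congr rfl fun g hg => ?_
    rw [aux_det ε _ b hb, hpr g hg]
  have := congrArg (fun F => F c) main
  simpa only [auxAlt_apply, AlternatingMap.smul_apply] using this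
end

section
/- Let A be a commutative ring and let B₁, B₂ be commutative A-algebras that are free A-modules of finite ranks d₁ and d₂ respectively. Consider the A-algebra homomorphism Φ from the (d₁+d₂)-fold tensor power ⨂[A]^{d₁+d₂} (B₁ × B₂) to B₁^{⊗ d₁} ⊗_A B₂^{⊗ d₂} determined on pure tensors by x_0 ⊗ ⋯ ⊗ x_{d₁+d₂-1} ↦ (pr₁ x_0 ⊗ ⋯ ⊗ pr₁ x_{d₁-1}) ⊗ (pr₂ x_{d₁} ⊗ ⋯ ⊗ pr₂ x_{d₁+d₂-1}), where pr₁, pr₂ are the two projections of the product algebra B₁ × B₂. If an element z of ⨂[A]^{d₁+d₂} (B₁ × B₂) is fixed by the action of every permutation of the d₁+d₂ tensor factors, then Φ(z) is fixed by the action of every permutation of the first d₁ tensor factors (acting on B₁^{⊗ d₁}) and of every permutation of the last d₂ tensor factors (acting on B₂^{⊗ d₂}). -/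
open scoped TensorProduct

/-- Lemma 2.3 (first assertion) of the paper: the `A`-algebra homomorphism
`pr₁^{⊗ d₁} ⊗ pr₂^{⊗ d₂} : (B₁ × B₂)^{⊗(d₁+d₂)} → B₁^{⊗ d₁} ⊗_A B₂^{⊗ d₂}` carries
symmetric tensors to tensors symmetric in the first `d₁` and the last `d₂` factors. -/
theorem map_symmetric_of_symmetric {A B₁ B₂ : Type*} [CommRing A]
    [CommRing B₁] [CommRing B₂] [Algebra A B₁] [Algebra A B₂]
    (d₁ d₂ : ℕ) [Module.Free A B₁] [Module.Free A B₂]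
    [Module.Finite A B₁] [Module.Finite A B₂]
    (h₁ : Module.finrank A B₁ = d₁) (h₂ : Module.finrank A B₂ = d₂)
    (Φ : (⨂[A] _ : Fin (d₁ + d₂), (B₁ × B₂)) →ₐ[A]
      (⨂[A] _ : Fin d₁, B₁) ⊗[A] (⨂[A] _ : Fin d₂, B₂))
    (hΦ : ∀ x : Fin (d₁ + d₂) → B₁ × B₂,
      Φ (PiTensorProduct.tprod A x) =
        (PiTensorProduct.tprod A fun i : Fin d₁ => (x (Fin.castAdd d₂ i)).1) ⊗ₜ[A]
          (PiTensorProduct.tprod A fun i : Fin d₂ => (x (Fin.natAdd d₁ i)).2))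
    (z : ⨂[A] _ : Fin (d₁ + d₂), (B₁ × B₂))
    (hz : ∀ σ : Equiv.Perm (Fin (d₁ + d₂)),
      PiTensorProduct.reindex A (fun _ => B₁ × B₂) σ z = z) :
    (∀ σ₁ : Equiv.Perm (Fin d₁),
      TensorProduct.map (PiTensorProduct.reindex A (fun _ => B₁) σ₁).toLinearMap
        LinearMap.id (Φ z) = Φ z) ∧
    (∀ σ₂ : Equiv.Perm (Fin d₂),
      TensorProduct.map LinearMap.id
        (PiTensorProduct.reindex A (fun _ => B₂) σ₂).toLinearMap (Φ z) = Φ z) := by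
  have key : ∀ (σ₁ : Equiv.Perm (Fin d₁)) (σ₂ : Equiv.Perm (Fin d₂)),
      TensorProduct.map (PiTensorProduct.reindex A (fun _ => B₁) σ₁).toLinearMap
        (PiTensorProduct.reindex A (fun _ => B₂) σ₂).toLinearMap (Φ z) = Φ z := by
    intro σ₁ σ₂
    let σ : Equiv.Perm (Fin (d₁ + d₂)) :=
      finSumFinEquiv.permCongr (Equiv.sumCongr σ₁ σ₂)
    have h : (TensorProduct.map (PiTensorProduct.reindex A (fun _ => B₁) σ₁).toLinearMap
        (PiTensorProduct.reindex A (fun _ => B₂) σ₂).toLinearMap) ∘ₗ Φ.toLinearMap =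
        Φ.toLinearMap ∘ₗ (PiTensorProduct.reindex A (fun _ => B₁ × B₂) σ).toLinearMap := by
      apply PiTensorProduct.ext
      ext x
      simp only [LinearMap.compMultilinearMap_apply, LinearMap.comp_apply,
        AlgHom.toLinearMap_apply, LinearEquiv.coe_coe]
      rw [hΦ, TensorProduct.map_tmul, LinearEquiv.coe_coe, LinearEquiv.coe_coe,
        PiTensorProduct.reindex_tprod, PiTensorProduct.reindex_tprod,
        PiTensorProduct.reindex_tprod, hΦ]
      congr 2
      · ext i
        simp [σ, Equiv.permCongr_def]
        rw [finSumFinEquiv_symm_apply_castAdd]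
        simp
      · ext i
        simp [σ, Equiv.permCongr_def]
        rw [finSumFinEquiv_symm_apply_natAdd]
        simp
    have h' := LinearMap.congr_fun h z
    simp only [LinearMap.comp_apply, AlgHom.toLinearMap_apply, LinearEquiv.coe_coe] at h'
    rw [hz σ] at h'
    exact h'
  refine ⟨fun σ₁ => ?_, fun σ₂ => ?_⟩
  · have := key σ₁ (Equiv.refl _)
    rwa [PiTensorProduct.reindex_refl] at this
  · have := key (Equiv.refl _) σ₂
    rwa [PiTensorProduct.reindex_refl] at this
end

section
/- Let A be a commutative ring, A' a commutative A-algebra, d ≥ 1 an integer, and B an A-module that is free of finite rank. Then the natural A'-linear map ((⨂[A]^d B)^{S_d}) ⊗_A A' → (⨂[A']^d (B ⊗_A A'))^{S_d}, induced by base change of the tensor power along A → A' (which carries S_d-fixed elements to S_d-fixed elements), is an isomorphism of A'-modules. In other words, the submodule of symmetric tensors in the d-fold tensor power of a finite free module commutes with arbitrary base change. -/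
open scoped TensorProduct

/-- The submodule of the `d`-fold tensor power `⨂[A]^d B` consisting of the elements
fixed by the action of the symmetric group `S_d` permuting the tensor factors. -/
def symmetricFixed (A : Type*) [CommSemiring A] (d : ℕ) (B : Type*) [AddCommMonoid B]
    [Module A B] : Submodule A (⨂[A] _ : Fin d, B) where
  carrier := {z | ∀ σ : Equiv.Perm (Fin d), PiTensorProduct.reindex A (fun _ => B) σ z = z}
  add_mem' hx hy := fun σ => by rw [map_add, hx σ, hy σ]
  zero_mem' := fun σ => by rw [map_zero]
  smul_mem' a x hx := fun σ => by rw [map_smul, hx σ]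

/-- The canonical base-change map `⨂[A]^d B → ⨂[A']^d (A' ⊗[A] B)` sending
`b_0 ⊗ ⋯ ⊗ b_{d-1}` to `(1 ⊗ b_0) ⊗ ⋯ ⊗ (1 ⊗ b_{d-1})`. -/
noncomputable def tensorPowerBaseChange (A A' B : Type*) [CommRing A] [CommRing A']
    [Algebra A A'] [AddCommGroup B] [Module A B] (d : ℕ) :
    (⨂[A] _ : Fin d, B) →ₗ[A] ⨂[A'] _ : Fin d, (A' ⊗[A] B) :=
  PiTensorProduct.lift
    (((PiTensorProduct.tprod A' (s := fun _ : Fin d => A' ⊗[A] B)).restrictScalars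
      A).compLinearMap fun _ => TensorProduct.mk A A' B 1)

open Module in
theorem exists_orbit_basis {R M J O : Type*} [CommRing R] [AddCommGroup M] [Module R M]
    [Fintype J] [Fintype O] [DecidableEq O] (e : Basis J R M) (p : J → O)
    (hp : Function.Surjective p) (S : Submodule R M)
    (hS : ∀ z, z ∈ S ↔ ∀ j k, p j = p k → e.repr z j = e.repr z k) :
    ∃ b : Basis O R S, ∀ o, (b o : M) = ∑ j, if p j = o then e j else 0 := by
  classical
  have hr : ∀ (f : O → R) (j : J), e.repr (∑ j, f (p j) • e j) j = f (p j) := fun f j =>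
    e.repr_sum_self (fun j => f (p j)) ▸ rfl
  let E : S ≃ₗ[R] (O → R) :=
    { toFun := fun z o => e.repr (z : M) (Function.surjInv hp o)
      map_add' := fun x y => by ext o; simp
      map_smul' := fun a x => by ext o; simp
      invFun := fun f => ⟨∑ j, f (p j) • e j, (hS _).2 fun j k h => by rw [hr, hr, h]⟩
      left_inv := fun z => by
        apply Subtype.ext
        apply e.ext_elem
        intro j
        rw [hr (fun o => e.repr (z : M) (Function.surjInv hp o))]
        exact (hS _).1 z.2 _ _ (Function.surjInv_eq hp _)
      right_inv := fun f => by
        ext o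
        change e.repr (∑ j, f (p j) • e j) _ = _
        rw [hr, Function.surjInv_eq hp] }
  refine ⟨Basis.ofEquivFun E, fun o => ?_⟩
  rw [Basis.coe_ofEquivFun]
  change ∑ j, (Pi.single o (1 : R) : O → R) (p j) • e j = _
  refine Finset.sum_congr rfl fun j _ => ?_
  by_cases h : p j = o
  · subst h; simp
  · simp [h]

/-- Reindexing equivalence on words. -/
def wordSetoid (d : ℕ) (I : Type*) : Setoid (Fin d → I) where
  r j k := ∃ σ : Equiv.Perm (Fin d), k = j ∘ σ
  iseqv :=
    { refl := fun j => ⟨1, rfl⟩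
      symm := by
        rintro j _ ⟨σ, rfl⟩
        exact ⟨σ.symm, by ext i; simp⟩
      trans := by
        rintro j _ _ ⟨σ, rfl⟩ ⟨τ, rfl⟩
        exact ⟨σ * τ, rfl⟩ }

open Module in
theorem mem_symmetricFixed_iff_repr {R M I : Type*} [CommRing R] [AddCommGroup M] [Module R M]
    (b : Basis I R M) (d : ℕ) (z : ⨂[R] _ : Fin d, M) :
    z ∈ symmetricFixed R d M ↔ ∀ j k : Fin d → I,
      (Quotient.mk (wordSetoid d I) j) = Quotient.mk (wordSetoid d I) k →
      (Basis.piTensorProduct fun _ : Fin d => b).repr z j =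
        (Basis.piTensorProduct fun _ : Fin d => b).repr z k := by
  have key : ∀ (σ : Equiv.Perm (Fin d)) (z : ⨂[R] _ : Fin d, M) (j : Fin d → I),
      (Basis.piTensorProduct fun _ : Fin d => b).repr
        (PiTensorProduct.reindex R (fun _ => M) σ z) j =
      (Basis.piTensorProduct fun _ : Fin d => b).repr z (j ∘ σ) := by
    intro σ z j
    induction z using PiTensorProduct.induction_on with
    | smul_tprod r f =>
      rw [map_smul, map_smul, map_smul, PiTensorProduct.reindex_tprod]
      simp only [Finsupp.smul_apply, Basis.piTensorProduct_repr_tprod_apply, Function.comp]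
      congr 1
      rw [← Equiv.prod_comp σ (fun i => b.repr (f (σ.symm i)) (j i))]
      refine Finset.prod_congr rfl fun i _ => ?_
      have h : σ.symm (σ i) = i := σ.symm_apply_apply i
      exact congrArg (fun t => b.repr (f t) (j (σ i))) h
    | add x y hx hy => simp only [map_add, Finsupp.add_apply, hx, hy]
  constructor
  · intro hz j k h
    obtain ⟨σ, rfl⟩ := Quotient.exact h
    rw [← key, hz σ]
  · intro h σ
    apply (Basis.piTensorProduct fun _ : Fin d => b).ext_elem
    intro j
    rw [key]
    exact (h _ _ (Quotient.sound ⟨σ, rfl⟩)).symm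

open Module Classical in
theorem exists_symmetricFixed_basis {R M I : Type*} [CommRing R] [AddCommGroup M] [Module R M]
    [Fintype I] (b : Basis I R M) (d : ℕ) :
    ∃ s : Basis (Quotient (wordSetoid d I)) R (symmetricFixed R d M),
      ∀ o, (s o : ⨂[R] _ : Fin d, M) = ∑ j : Fin d → I,
        if Quotient.mk (wordSetoid d I) j = o then
          (Basis.piTensorProduct fun _ : Fin d => b) j else 0 := by
  let _ : Fintype (Quotient (wordSetoid d I)) := Fintype.ofFinite _
  exact exists_orbit_basis (Basis.piTensorProduct fun _ : Fin d => b)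
    (Quotient.mk (wordSetoid d I))
    Quotient.mk_surjective (symmetricFixed R d M) (mem_symmetricFixed_iff_repr b d)

/-- Symmetric tensors in the `d`-fold tensor power of a finite free module commute with
arbitrary base change: the natural `A'`-linear map
`((⨂[A]^d B)^{S_d}) ⊗_A A' → (⨂[A']^d (B ⊗_A A'))^{S_d}` induced by base change is an
isomorphism of `A'`-modules. -/
theorem symmetricFixed_baseChange_bijective {A A' B : Type*} [CommRing A] [CommRing A']
    [Algebra A A'] [AddCommGroup B] [Module A B] [Module.Free A B] [Module.Finite A B]
    (d : ℕ) (hd : 1 ≤ d) :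
    ∃ φ : (A' ⊗[A] (symmetricFixed A d B)) →ₗ[A'] ⨂[A'] _ : Fin d, (A' ⊗[A] B),
      (∀ (a : A') (z : symmetricFixed A d B),
        φ (a ⊗ₜ[A] z) = a • tensorPowerBaseChange A A' B d (z : ⨂[A] _ : Fin d, B)) ∧
      Function.Injective φ ∧
      LinearMap.range φ = symmetricFixed A' d (A' ⊗[A] B) := by
  classical
  let b := Module.Free.chooseBasis A B
  let e := Basis.piTensorProduct fun _ : Fin d => b
  let e' := Basis.piTensorProduct fun _ : Fin d => b.baseChange A'
  obtain ⟨s, hs⟩ := exists_symmetricFixed_basis b d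
  obtain ⟨s', hs'⟩ := exists_symmetricFixed_basis (b.baseChange A') d
  have he : ∀ j, tensorPowerBaseChange A A' B d (e j) = e' j := by
    intro j
    simp only [e, e', Basis.piTensorProduct_apply, tensorPowerBaseChange]
    rw [PiTensorProduct.lift.tprod]
    simp
  let φ : (A' ⊗[A] (symmetricFixed A d B)) →ₗ[A'] ⨂[A'] _ : Fin d, (A' ⊗[A] B) :=
    LinearMap.liftBaseChange A'
      (tensorPowerBaseChange A A' B d ∘ₗ (symmetricFixed A d B).subtype)
  have hφ : φ = (symmetricFixed A' d (A' ⊗[A] B)).subtype ∘ₗ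
      ((s.baseChange A').equiv s' (Equiv.refl _)).toLinearMap := by
    apply (s.baseChange A').ext
    intro o
    rw [LinearMap.comp_apply, LinearEquiv.coe_coe, Module.Basis.equiv_apply,
      Equiv.refl_apply, Submodule.subtype_apply, hs']
    simp only [LinearMap.comp_apply, Submodule.subtype_apply, φ, Module.Basis.baseChange_apply,
      LinearMap.liftBaseChange_tmul, one_smul, hs, map_sum]
    refine Finset.sum_congr rfl fun j _ => ?_
    split_ifs
    · exact he j
    · exact map_zero _
  refine ⟨φ, fun a z => ?_, ?_, ?_⟩
  · simp [φ, LinearMap.liftBaseChange_tmul]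
  · rw [hφ]
    exact Subtype.val_injective.comp (LinearEquiv.injective _)
  · rw [hφ, LinearMap.range_comp, LinearEquiv.range, Submodule.map_top, Submodule.range_subtype]
end
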